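/- Let N ≥ 1 and d ≥ 2 be integers. Let U = {x ∈ ℝ^N : p_k(x) = 0 for all k, q_ℓ(x) ≤ 0 for ℓ = 1,…,b₁, r_t(x) < 0 for t = 1,…,b₂}, where all the polynomials p_k, q_ℓ, r_t are real polynomials in N variables of total degree at most d, and set b = b₁ + b₂. Then for every affine subspace L ⊆ ℝ^N, the set U ∩ L, equipped with the subspace topology, has at most (2d)^{N+b} connected components. -/

import Mathlib

/-!
A slack variable `y` with `q + y ^ 2 = 0` for each inequality, after replacing `r < 0` by
`r + ε ≤ 0`, and then a sum of squares reduce the bound to the zero set of a nonnegative polynomial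
`P` of degree at most `m = 2 * d` in `N + b` variables. Finitely many points in distinct components
of `{P = 0}` still lie in distinct components of the compact set
`{P + ε * (∑ x_j ^ 2 - R) ≤ 0}` when `R` is large and `ε > 0` is small, because these sets decrease
into `{P = 0}` as `ε → 0`. Adding a small term `η * ∑ x_j ^ (m + 1)` leaves a local minimum in each
of these components, hence a critical point. The critical equations read `x_j ^ m = H_j(x)` with
`deg H_j < m`; monomials with all exponents below `m` span the quotient by these relations, so there
are at most `m ^ (N + b)` solutions. Membership in the affine subspace is a system of linear
equations, which do not enter the bound.
-/

open MvPolynomial Finset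

section Bezout

theorem exists_sub_mem_span_X_pow_sub {σ R : Type*} [CommRing R] [LinearOrder σ]
    [WellFoundedGT σ] {m : ℕ} {H : σ → MvPolynomial σ R} (hH : ∀ j, (H j).totalDegree < m)
    (f : MvPolynomial σ R) :
    ∃ g, f - g ∈ Ideal.span (Set.range fun j => X j ^ m - H j) ∧
      ∀ a ∈ g.support, ∀ j, a j < m := by
  classical
  cases subsingleton_or_nontrivial R
  · exact ⟨0, by simp [Subsingleton.elim f 0], by simp⟩
  have degree_X_pow (j : σ) :
      MonomialOrder.degLex.degree (X j ^ m : MvPolynomial σ R) = Finsupp.single j m := by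
    rw [X_pow_eq_monomial, MonomialOrder.degree_monomial, if_neg one_ne_zero]
  have degree_lt (j : σ) : MonomialOrder.degLex.toSyn (MonomialOrder.degLex.degree (H j)) <
      MonomialOrder.degLex.toSyn (MonomialOrder.degLex.degree (X j ^ m : MvPolynomial σ R)) := by
    rw [MonomialOrder.degLex_lt_iff, Finsupp.DegLex.lt_iff, degree_X_pow]
    left
    simpa [degree_degLexDegree] using hH j
  obtain ⟨q, g, hfg, -, hg⟩ := MonomialOrder.degLex.div_set
    (B := Set.range fun j => X j ^ m - H j) (by
      rintro _ ⟨j, rfl⟩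
      rw [MonomialOrder.leadingCoeff_sub_of_lt (degree_lt j), MonomialOrder.leadingCoeff,
        degree_X_pow, coeff_X_pow, if_pos rfl]
      exact isUnit_one) f
  refine ⟨g, ?_, fun a ha j => ?_⟩
  · rw [hfg, add_sub_cancel_right]
    exact Submodule.sum_mem _ fun b _ => Ideal.mul_mem_left _ _ (Ideal.subset_span b.2)
  · have := hg a ha _ ⟨j, rfl⟩
    rw [MonomialOrder.degree_sub_of_lt (degree_lt j), degree_X_pow] at this
    simpa using this

theorem span_mkₐ_monomial_eq_top {σ R : Type*} [Finite σ] [CommRing R] {m : ℕ}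
    {H : σ → MvPolynomial σ R} (hH : ∀ j, (H j).totalDegree < m) :
    Submodule.span R (Set.range fun a : σ → Fin m =>
      Ideal.Quotient.mkₐ R (Ideal.span (Set.range fun j => X j ^ m - H j))
        (monomial (Finsupp.equivFunOnFinite.symm fun j => (a j : ℕ)) 1)) = ⊤ := by
  let : LinearOrder σ := LinearOrder.lift' _ (Finite.equivFin σ).injective
  refine eq_top_iff.2 fun z _ => ?_
  obtain ⟨f, rfl⟩ := Ideal.Quotient.mk_surjective z
  obtain ⟨g, hfg, hg⟩ := exists_sub_mem_span_X_pow_sub hH f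
  rw [Ideal.Quotient.eq.2 hfg, ← Ideal.Quotient.mkₐ_eq_mk R, g.as_sum, map_sum]
  refine Submodule.sum_mem _ fun a ha => ?_
  rw [← mul_one (coeff a g), ← smul_eq_mul, ← smul_monomial, map_smul]
  refine Submodule.smul_mem _ _ (Submodule.subset_span ⟨fun j => ⟨a j, hg a ha j⟩, ?_⟩)
  simp only [Finsupp.equivFunOnFinite_symm_coe]

theorem encard_setOf_pow_eq_eval_le {σ K : Type*} [Fintype σ] [Field K] {m : ℕ}
    {H : σ → MvPolynomial σ K} (hH : ∀ j, (H j).totalDegree < m) :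
    {x : σ → K | ∀ j, x j ^ m = eval x (H j)}.encard ≤ (m ^ Fintype.card σ : ℕ) := by
  classical
  set I := Ideal.span (Set.range fun j => X j ^ m - H j)
  have span_eq_top := span_mkₐ_monomial_eq_top hH
  have : Module.Finite K (MvPolynomial σ K ⧸ I) :=
    ⟨Submodule.fg_def.2 ⟨_, Set.finite_range _, span_eq_top⟩⟩
  have finrank_le : Module.finrank K (MvPolynomial σ K ⧸ I) ≤ m ^ Fintype.card σ := by
    simpa using finrank_le_of_span_eq_top span_eq_top
  have eval_eq_zero (x : {x : σ → K | ∀ j, x j ^ m = eval x (H j)}) :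
      ∀ f ∈ I, aeval (R := K) x.1 f = 0 := by
    refine fun f hf => Ideal.span_le (I := RingHom.ker (aeval x.1)).2 ?_ hf
    rintro _ ⟨j, rfl⟩
    simp [aeval_eq_eval, x.2 j]
  have injective : Function.Injective fun x => Ideal.Quotient.liftₐ I _ (eval_eq_zero x) := by
    refine fun x y hxy => Subtype.ext <| funext fun j => ?_
    simpa using DFunLike.congr_fun hxy (Ideal.Quotient.mk I (X j))
  calc _ ≤ ENat.card (MvPolynomial σ K ⧸ I →ₐ[K] K) := ENat.card_le_card_of_injective injective
    _ = Nat.card (MvPolynomial σ K ⧸ I →ₐ[K] K) := ENat.card_eq_coe_natCard _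
    _ ≤ _ := by exact_mod_cast (card_algHom_le_finrank K _ K).trans finrank_le

end Bezout

section Critical

theorem totalDegree_pderiv_lt {σ R : Type*} [CommSemiring R] {m : ℕ} (hm : 0 < m)
    {F : MvPolynomial σ R} (hF : F.totalDegree ≤ m) (j : σ) : (pderiv j F).totalDegree < m := by
  refine (Finset.sup_lt_iff hm).2 fun a ha => ?_
  rw [mem_support_iff, coeff_pderiv] at ha
  have := (le_totalDegree (mem_support_iff.2 (left_ne_zero_of_mul ha))).trans hF
  rw [Finsupp.sum_add_index' (by simp) (by simp)] at this
  simpa using this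

theorem encard_setOf_eval_pderiv_eq_zero_le {σ K : Type*} [Fintype σ] [Field K] [CharZero K]
    {m : ℕ} (hm : 0 < m) {G : MvPolynomial σ K} (hG : G.totalDegree ≤ m) {η : K} (hη : η ≠ 0) :
    {x : σ → K | ∀ j, eval x (pderiv j (G + C η * ∑ i, X i ^ (m + 1))) = 0}.encard ≤
      (m ^ Fintype.card σ : ℕ) := by
  classical
  set c : K := η * (m + 1)
  have hc : c ≠ 0 := mul_ne_zero hη (by exact_mod_cast m.succ_ne_zero)
  have degree_lt (j : σ) : (C (-c⁻¹) * pderiv j G).totalDegree < m :=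
    (totalDegree_mul _ _).trans_lt (by simpa using totalDegree_pderiv_lt hm hG j)
  refine (Set.encard_le_encard fun x hx => ?_).trans (encard_setOf_pow_eq_eval_le degree_lt)
  intro j
  have pderiv_sum : pderiv j (∑ i, X i ^ (m + 1) : MvPolynomial σ K) = C (m + 1 : K) * X j ^ m := by
    simp [pderiv_X, Pi.single_apply]
  have h : eval x (pderiv j G) + c * x j ^ m = 0 := by
    simpa [pderiv_sum, c, mul_assoc] using hx j
  simp only [map_mul, eval_C]
  field_simp
  linear_combination h

theorem hasDerivAt_eval_update {σ 𝕜 : Type*} [DecidableEq σ] [NontriviallyNormedField 𝕜]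
    (F : MvPolynomial σ 𝕜) (x : σ → 𝕜) (j : σ) (t : 𝕜) :
    HasDerivAt (fun t => eval (Function.update x j t) F)
      (eval (Function.update x j t) (pderiv j F)) t := by
  induction F using MvPolynomial.induction_on with
  | C a => simpa using hasDerivAt_const t a
  | add p q hp hq => simpa using! hp.add hq
  | mul_X p i hp =>
    have hX : HasDerivAt (fun t => Function.update x j t i)
        (eval (Function.update x j t) (pderiv j (X i))) t := by
      rcases eq_or_ne i j with rfl | hij
      · simpa using hasDerivAt_id' t
      · simpa [hij, pderiv_X_of_ne hij] using hasDerivAt_const t (x i)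
    simpa [add_comm, mul_comm] using! hp.mul hX

theorem eval_pderiv_eq_zero_of_isLocalMin {σ : Type*} {F : MvPolynomial σ ℝ} {x : σ → ℝ}
    (h : IsLocalMin (fun x => eval x F) x) (j : σ) : eval x (pderiv j F) = 0 := by
  classical
  have isLocalMin_update : IsLocalMin (fun t => eval (Function.update x j t) F) (x j) := by
    rw [← Function.update_eq_self j x] at h
    exact h.comp_continuous (by fun_prop)
  simpa using isLocalMin_update.hasDerivAt_eq_zero (hasDerivAt_eval_update F x j (x j))

end Critical

section Components

variable {X Y : Type*} [TopologicalSpace X] [TopologicalSpace Y]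

theorem connectedComponentIn_eq_of_mapsTo {f : X → Y} {s : Set X} {t : Set Y}
    (hf : ContinuousOn f s) (hst : Set.MapsTo f s t) {x y : X} (hx : x ∈ s) (hy : y ∈ s)
    (h : connectedComponentIn s x = connectedComponentIn s y) :
    connectedComponentIn t (f x) = connectedComponentIn t (f y) := by
  have hyx : y ∈ connectedComponentIn s x := h ▸ mem_connectedComponentIn hy
  exact connectedComponentIn_eq <| connectedComponentIn_mono _ hst.image_subset <|
    hf.mapsTo_connectedComponentIn hx hyx

theorem connectedComponents_coe_eq_coe_iff {s : Set X} {x y : s} :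
    (x : ConnectedComponents s) = y ↔
      connectedComponentIn s (x : X) = connectedComponentIn s (y : X) := by
  rw [ConnectedComponents.coe_eq_coe, connectedComponentIn_eq_image x.2,
    connectedComponentIn_eq_image y.2, Subtype.val_injective.image_injective.eq_iff]

theorem enatCard_connectedComponents_le_iff {s : Set X} {n : ℕ} :
    ENat.card (ConnectedComponents s) ≤ n ↔
      ∀ S : Finset X, ↑S ⊆ s → Set.InjOn (connectedComponentIn s) S → #S ≤ n := by
  classical
  constructor
  · intro h S hS hinj
    have injective : Function.Injective fun x : S => ((⟨x, hS x.2⟩ : s) : ConnectedComponents s) :=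
      fun x y hxy => Subtype.ext (hinj x.2 y.2 (connectedComponents_coe_eq_coe_iff.1 hxy))
    simpa using (ENat.card_le_card_of_injective injective).trans h
  · intro h
    let rep : ConnectedComponents s → s := Function.surjInv ConnectedComponents.surjective_coe
    have coe_rep (c : ConnectedComponents s) : (rep c : ConnectedComponents s) = c :=
      Function.surjInv_eq ConnectedComponents.surjective_coe c
    have injective : Function.Injective fun c => connectedComponentIn s (rep c : X) :=
      fun c c' hc => by rw [← coe_rep c, ← coe_rep c', connectedComponents_coe_eq_coe_iff.2 hc]
    refine (Cardinal.toENat_le_natCast (n := n)).2 (Cardinal.card_le_of fun T => ?_)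
    rw [← card_image_of_injective T (f := fun c => (rep c : X)) fun c c' hc =>
      injective (congrArg (connectedComponentIn s) hc)]
    refine h _ (by simp [Set.subset_def]) ?_
    rw [coe_image]
    exact Set.InjOn.image_of_comp injective.injOn

theorem enatCard_connectedComponents_le_of_forall_finset {s : Set X} {n : ℕ}
    (h : ∀ S : Finset X, ↑S ⊆ s → ∃ (t : Set Y) (f : Y → X),
      ENat.card (ConnectedComponents t) ≤ n ∧ ContinuousOn f t ∧ Set.MapsTo f t s ∧
        Set.SurjOn f t S) :
    ENat.card (ConnectedComponents s) ≤ n := by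
  refine enatCard_connectedComponents_le_iff.2 fun S hS hinj => ?_
  obtain ⟨t, f, ht, hf, hts, hsurj⟩ := h S hS
  obtain ⟨S', hS't, hbij⟩ := hsurj.exists_bijOn_subset
  lift S' to Finset Y using hbij.finite_iff_finite.2 S.finite_toSet
  rw [← Finset.card_nbij f hbij.mapsTo hbij.injOn hbij.surjOn]
  exact enatCard_connectedComponents_le_iff.1 ht S' hS't fun x hx y hy hxy =>
    hbij.injOn hx hy <| hinj (hbij.mapsTo hx) (hbij.mapsTo hy) <|
      connectedComponentIn_eq_of_mapsTo hf hts (hS't hx) (hS't hy) hxy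

theorem isCompact_connectedComponentIn {K : Set X} (hK : IsCompact K) (x : X) :
    IsCompact (connectedComponentIn K x) := by
  by_cases hx : x ∈ K
  · have := isCompact_iff_compactSpace.1 hK
    rw [connectedComponentIn_eq_image hx]
    exact isClosed_connectedComponent.isCompact.image continuous_subtype_val
  · simp [connectedComponentIn_eq_empty hx]

theorem isPreconnected_iInter_of_directed {ι : Type*} [Nonempty ι] [T2Space X] {C : ι → Set X}
    (hdir : Directed (· ⊇ ·) C) (hcpt : ∀ i, IsCompact (C i)) (hconn : ∀ i, IsPreconnected (C i)) :
    IsPreconnected (⋂ i, C i) := by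
  have hInter : IsCompact (⋂ i, C i) := (hcpt (Classical.arbitrary ι)).of_isClosed_subset
    (isClosed_iInter fun i => (hcpt i).isClosed) (Set.iInter_subset _ _)
  rw [isPreconnected_iff_subset_of_fully_disjoint_closed hInter.isClosed]
  intro u v hu hv huv hdisj
  obtain ⟨U, V, hU, hV, huU, hvV, hUV⟩ := SeparatedNhds.of_isCompact_isCompact
    (hInter.inter_right hu) (hInter.inter_right hv)
    (hdisj.mono Set.inter_subset_right Set.inter_subset_right)
  have hInterUV : ⋂ i, C i ⊆ U ∪ V := fun z hz =>
    (huv hz).imp (fun h => huU ⟨hz, h⟩) (fun h => hvV ⟨hz, h⟩)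
  obtain ⟨i, hi⟩ := exists_subset_nhds_of_isCompact hdir hcpt fun z hz =>
    (hU.union hV).mem_nhds (hInterUV hz)
  rcases isPreconnected_iff_subset_of_disjoint.1 (hconn i) U V hU hV hi (by simp [hUV.inter_eq])
    with hiU | hiV
  · exact .inl fun z hz => (huv hz).resolve_right fun hzv =>
      Set.disjoint_left.1 hUV (hiU (Set.mem_iInter.1 hz i)) (hvV ⟨hz, hzv⟩)
  · exact .inr fun z hz => (huv hz).resolve_left fun hzu =>
      Set.disjoint_left.1 hUV (huU ⟨hz, hzu⟩) (hiV (Set.mem_iInter.1 hz i))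

theorem connectedComponentIn_iInter_of_directed {ι : Type*} [Nonempty ι] [T2Space X]
    {K : ι → Set X} (hdir : Directed (· ⊇ ·) K) (hcpt : ∀ i, IsCompact (K i)) (x : X) :
    connectedComponentIn (⋂ i, K i) x = ⋂ i, connectedComponentIn (K i) x := by
  by_cases hx : x ∈ ⋂ i, K i
  · refine (Set.subset_iInter fun i => connectedComponentIn_mono x (Set.iInter_subset K i)).antisymm
      ?_
    have hconn : IsPreconnected (⋂ i, connectedComponentIn (K i) x) :=
      isPreconnected_iInter_of_directed
        (fun i j => (hdir i j).imp fun _ h =>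
          ⟨connectedComponentIn_mono x h.1, connectedComponentIn_mono x h.2⟩)
        (fun i => isCompact_connectedComponentIn (hcpt i) x)
        fun _ => isPreconnected_connectedComponentIn
    exact hconn.subset_connectedComponentIn
      (Set.mem_iInter.2 fun i => mem_connectedComponentIn (Set.mem_iInter.1 hx i))
      (Set.iInter_mono fun i => connectedComponentIn_subset _ _)
  · obtain ⟨i, hi⟩ : ∃ i, x ∉ K i := by simpa using hx
    rw [connectedComponentIn_eq_empty hx, eq_comm, ← Set.subset_empty_iff,
      ← connectedComponentIn_eq_empty hi]
    exact Set.iInter_subset _ i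

theorem exists_injOn_connectedComponentIn_of_iInter {ι : Type*} [Nonempty ι] [T2Space X]
    {K : ι → Set X} (hdir : Directed (· ⊇ ·) K) (hcpt : ∀ i, IsCompact (K i)) {S : Finset X}
    (hS : ↑S ⊆ ⋂ i, K i) (hinj : Set.InjOn (connectedComponentIn (⋂ i, K i)) S) :
    ∃ i, Set.InjOn (connectedComponentIn (K i)) S := by
  classical
  have separating_index (x y : X) : ∃ i,
      connectedComponentIn (K i) x = connectedComponentIn (K i) y →
      connectedComponentIn (⋂ i, K i) x = connectedComponentIn (⋂ i, K i) y := by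
    by_contra! h
    refine (h (Classical.arbitrary ι)).2 ?_
    simp only [connectedComponentIn_iInter_of_directed hdir hcpt, (h _).1]
  choose i hi using separating_index
  obtain ⟨k, hk⟩ := hdir.finset_le ((S ×ˢ S).image fun z => i z.1 z.2)
  refine ⟨k, fun x hx y hy hxy => hinj hx hy (hi x y ?_)⟩
  have hsub : K k ⊆ K (i x y) := hk _ (mem_image_of_mem _ (mk_mem_product hx hy))
  exact connectedComponentIn_eq_of_mapsTo continuousOn_id hsub
    (Set.mem_iInter.1 (hS hx) k) (Set.mem_iInter.1 (hS hy) k) hxy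

end Components

section LocalMin

variable {X : Type*} [TopologicalSpace X]

theorem exists_pos_injOn_connectedComponentIn_sublevel [T2Space X] {f ρ : X → ℝ}
    (hf : Continuous f) (hρ : Continuous ρ) (hf0 : ∀ x, 0 ≤ f x) (hcpt : IsCompact {x | ρ x ≤ 0})
    {S : Finset X} (hfS : ∀ x ∈ S, f x = 0) (hρS : ∀ x ∈ S, ρ x ≤ 0)
    (hinj : Set.InjOn (connectedComponentIn {x | f x = 0}) S) :
    ∃ ε > 0, IsCompact {x | f x + ε * ρ x ≤ 0} ∧
      Set.InjOn (connectedComponentIn {x | f x + ε * ρ x ≤ 0}) S := by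
  let K : Set.Ioi (0 : ℝ) → Set X := fun ε => {x | f x + ε * ρ x ≤ 0}
  have ρ_nonpos {ε : Set.Ioi (0 : ℝ)} {x : X} (hx : x ∈ K ε) : ρ x ≤ 0 :=
    nonpos_of_mul_nonpos_right (by linarith [hf0 x, hx.out]) ε.2
  have monotone_K : Monotone K := fun ε ε' hε x hx =>
    (add_le_add_right (mul_le_mul_of_nonpos_right (R := ℝ) hε (ρ_nonpos hx)) (f x)).trans hx
  have isCompact_K (ε) : IsCompact (K ε) :=
    hcpt.of_isClosed_subset (isClosed_le (by fun_prop) continuous_const) fun x => ρ_nonpos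
  have subset_iInter : ↑S ⊆ ⋂ ε, K ε := fun x hx => Set.mem_iInter.2 fun ε => by
    simpa [K, hfS x hx] using mul_nonpos_of_nonneg_of_nonpos ε.2.le (hρS x hx)
  have iInter_subset : ⋂ ε, K ε ⊆ {x | f x = 0} := fun x hx => by
    refine (le_of_forall_pos_le_add fun δ hδ => ?_).antisymm (hf0 x)
    obtain ⟨ε, hε, hεδ⟩ := exists_pos_mul_lt hδ (-ρ x)
    have : f x + ε * ρ x ≤ 0 := Set.mem_iInter.1 hx ⟨ε, hε⟩
    linarith
  obtain ⟨ε, hε⟩ := exists_injOn_connectedComponentIn_of_iInter monotone_K.directed_ge isCompact_K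
    subset_iInter fun x hx y hy hxy => hinj hx hy <|
      connectedComponentIn_eq_of_mapsTo continuousOn_id iInter_subset (subset_iInter hx)
        (subset_iInter hy) hxy
  exact ⟨ε, ε.2, isCompact_K ε, hε⟩

theorem eventually_exists_isLocalMin_mem_connectedComponentIn [LocallyConnectedSpace X]
    {g h : X → ℝ} (hg : Continuous g) (hh : Continuous h) (hcpt : IsCompact {x | g x ≤ 0})
    {x : X} (hx : g x < 0) :
    ∀ᶠ η in nhds (0 : ℝ), ∃ y ∈ connectedComponentIn {x | g x ≤ 0} x,
      IsLocalMin (fun z => g z + η * h z) y := by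
  have hxC : x ∈ connectedComponentIn {x | g x ≤ 0} x := mem_connectedComponentIn hx.le
  obtain ⟨B, hB⟩ := hcpt.exists_bound_of_continuousOn hh.continuousOn
  have perturbation_lt : ∀ᶠ η in nhds (0 : ℝ), g x + |η| * (B + B) < 0 :=
    (by fun_prop : Continuous fun η : ℝ => g x + |η| * (B + B)).tendsto 0 |>.eventually_lt_const
      (by simpa)
  filter_upwards [perturbation_lt] with η hη
  obtain ⟨y, hyC, hy⟩ := (isCompact_connectedComponentIn hcpt x).exists_isMinOn ⟨x, hxC⟩
    (f := fun z => g z + η * h z) (by fun_prop)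
  refine ⟨y, hyC, hy.isLocalMin ?_⟩
  have g_y_neg : g y < 0 := calc
    g y ≤ g x + η * (h x - h y) := by linarith [isMinOn_iff.1 hy x hxC]
    _ ≤ g x + |η| * |h x - h y| := by rw [← abs_mul]; gcongr; exact le_abs_self _
    _ ≤ g x + |η| * (B + B) := by
      gcongr
      exact norm_sub_le_of_le (hB x hx.le) (hB y (connectedComponentIn_subset _ _ hyC))
    _ < 0 := hη
  have sublevel_mem_nhds : {x | g x ≤ 0} ∈ nhds y :=
    (hg.tendsto y).eventually_le_const g_y_neg
  rw [connectedComponentIn_eq hyC]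
  exact connectedComponentIn_mem_nhds sublevel_mem_nhds

theorem exists_injOn_isLocalMin_perturbation [T2Space X] [LocallyConnectedSpace X]
    {f ρ h : X → ℝ} (hf : Continuous f) (hρ : Continuous ρ) (hh : Continuous h)
    (hf0 : ∀ x, 0 ≤ f x) (hcpt : IsCompact {x | ρ x ≤ 0}) {S : Finset X}
    (hfS : ∀ x ∈ S, f x = 0) (hρS : ∀ x ∈ S, ρ x < 0)
    (hinj : Set.InjOn (connectedComponentIn {x | f x = 0}) S) :
    ∃ ε η : ℝ, η ≠ 0 ∧ ∃ y : X → X, Set.InjOn y S ∧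
      ∀ x ∈ S, IsLocalMin (fun z => f z + ε * ρ z + η * h z) (y x) := by
  obtain ⟨ε, hε, hcptε, hinjε⟩ := exists_pos_injOn_connectedComponentIn_sublevel hf hρ hf0 hcpt hfS
    (fun x hx => (hρS x hx).le) hinj
  have hneg : ∀ x ∈ S, f x + ε * ρ x < 0 := fun x hx => by
    simpa [hfS x hx] using mul_neg_of_pos_of_neg hε (hρS x hx)
  have eventually_exists_isLocalMin := (Filter.eventually_all_finset S).2 fun x hx =>
    eventually_exists_isLocalMin_mem_connectedComponentIn (by fun_prop) hh hcptε (hneg x hx)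
  obtain ⟨η, hmin, hη⟩ := ((eventually_exists_isLocalMin.filter_mono nhdsWithin_le_nhds).and
    (self_mem_nhdsWithin : {0}ᶜ ∈ nhdsWithin (0 : ℝ) {0}ᶜ)).exists
  choose! y hyC hy using hmin
  refine ⟨ε, η, hη, y, fun x hx x' hx' hxx' => hinjε hx hx' ?_, hy⟩
  rw [connectedComponentIn_eq (hyC x hx), hxx', ← connectedComponentIn_eq (hyC x' hx')]

end LocalMin

section AffineSubspace

variable {ι K V : Type*} [Finite ι] [Field K] [AddCommGroup V] [Module K V]

theorem exists_mem_affineSubspace_iff_forall_eval_eq_zero (b : Module.Basis ι K V)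
    {L : AffineSubspace K V} (hL : (L : Set V).Nonempty) :
    ∃ l : ι → MvPolynomial ι K, (∀ i, (l i).totalDegree ≤ 1) ∧
      ∀ v, v ∈ L ↔ ∀ i, eval (b.repr v) (l i) = 0 := by
  classical
  cases nonempty_fintype ι
  obtain ⟨v₀, hv₀⟩ := hL
  obtain ⟨W, hW⟩ := L.direction.exists_isCompl
  let π : V →ₗ[K] V := W.projection L.direction hW.symm
  refine ⟨fun i => π.toMvPolynomial b b i - C (b.repr (π v₀) i), fun i =>
    (totalDegree_sub_C_le _ _).trans (π.toMvPolynomial_totalDegree_le b b i), fun v => ?_⟩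
  calc v ∈ L ↔ v - v₀ ∈ π.ker := by
        rw [Submodule.ker_projection, ← vsub_eq_sub,
          AffineSubspace.vsub_right_mem_direction_iff_mem hv₀]
    _ ↔ b.repr (π v) = b.repr (π v₀) := by
        rw [LinearMap.sub_mem_ker_iff, b.repr.injective.eq_iff]
    _ ↔ _ := by
      simp [DFunLike.ext_iff, sub_eq_zero, LinearMap.toMvPolynomial_eval_eq_apply]

end AffineSubspace

section Semialgebraic

/-- The basic semialgebraic subset of `ℝ^σ` cut out by the equations `p i = 0`, the weak
inequalities `q i ≤ 0` and the strict inequalities `r i < 0`, each kind with its own index type. -/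
def basicSemialgebraicSet {σ κ α β : Type*} (p : κ → MvPolynomial σ ℝ) (q : α → MvPolynomial σ ℝ)
    (r : β → MvPolynomial σ ℝ) : Set (σ → ℝ) :=
  {x | (∀ i, eval x (p i) = 0) ∧ (∀ i, eval x (q i) ≤ 0) ∧ ∀ i, eval x (r i) < 0}

variable {σ : Type*} [Fintype σ]

theorem isCompact_setOf_sum_sq_sub_le (R : ℝ) : IsCompact {x : σ → ℝ | ∑ j, x j ^ 2 - R ≤ 0} := by
  refine (isCompact_closedBall (0 : σ → ℝ) √R).of_isClosed_subset
    (isClosed_le (by fun_prop) continuous_const) fun x hx => ?_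
  rw [mem_closedBall_zero_iff, pi_norm_le_iff_of_nonneg R.sqrt_nonneg]
  exact fun j => Real.abs_le_sqrt <|
    (single_le_sum (f := fun j => x j ^ 2) (fun i _ => sq_nonneg (x i)) (mem_univ j)).trans
      (sub_nonpos.1 hx)

theorem enatCard_connectedComponents_setOf_eval_eq_zero_le {m : ℕ} (hm : 2 ≤ m)
    {P : MvPolynomial σ ℝ} (hP : P.totalDegree ≤ m) (hP0 : ∀ x, 0 ≤ eval x P) :
    ENat.card (ConnectedComponents {x : σ → ℝ | eval x P = 0}) ≤ (m ^ Fintype.card σ : ℕ) := by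
  refine enatCard_connectedComponents_le_iff.2 fun S hS hinj => ?_
  obtain ⟨R, hR⟩ : ∃ R, ∀ x ∈ S, ∑ j, x j ^ 2 - R < 0 := by
    obtain ⟨M, hM⟩ := (S.image fun x => ∑ j, x j ^ 2).bddAbove
    exact ⟨M + 1, fun x hx => by linarith [hM (mem_image_of_mem _ hx)]⟩
  obtain ⟨ε, η, hη, y, hy, hmin⟩ := exists_injOn_isLocalMin_perturbation
    (f := fun x => eval x P) (h := fun x => ∑ j, x j ^ (m + 1)) (continuous_eval P) (by fun_prop)
    (by fun_prop) hP0 (isCompact_setOf_sum_sq_sub_le R) hS hR hinj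
  let G : MvPolynomial σ ℝ := P + C ε * (∑ j, X j ^ 2 - C R)
  have hG : G.totalDegree ≤ m := by
    refine (totalDegree_add _ _).trans (max_le hP ((totalDegree_mul _ _).trans ?_))
    rw [totalDegree_C, zero_add]
    refine (totalDegree_sub_C_le _ _).trans (totalDegree_finsetSum_le fun j _ => ?_)
    rwa [totalDegree_X_pow]
  have mapsTo_critical :
      Set.MapsTo y S {x | ∀ j, eval x (pderiv j (G + C η * ∑ i, X i ^ (m + 1))) = 0} :=
    fun x hx => eval_pderiv_eq_zero_of_isLocalMin (by simpa [G] using hmin x hx)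
  rw [← Nat.cast_le (α := ℕ∞), ← Set.encard_coe_eq_coe_finsetCard]
  exact (Set.encard_le_encard_of_injOn mapsTo_critical hy).trans
    (encard_setOf_eval_pderiv_eq_zero_le (by omega) hG hη)

theorem enatCard_connectedComponents_setOf_forall_eval_eq_zero_le {κ : Type*} [Finite κ] {d : ℕ}
    (hd : 1 ≤ d) {p : κ → MvPolynomial σ ℝ} (hp : ∀ i, (p i).totalDegree ≤ d) :
    ENat.card (ConnectedComponents {x : σ → ℝ | ∀ i, eval x (p i) = 0}) ≤
      ((2 * d) ^ Fintype.card σ : ℕ) := by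
  cases nonempty_fintype κ
  have eval_sum_sq (x : σ → ℝ) : eval x (∑ i, p i ^ 2) = ∑ i, eval x (p i) ^ 2 := by simp
  have zeros_eq : {x : σ → ℝ | ∀ i, eval x (p i) = 0} = {x | eval x (∑ i, p i ^ 2) = 0} := by
    ext x
    simp [sum_eq_zero_iff_of_nonneg, sq_nonneg]
  rw [zeros_eq]
  refine enatCard_connectedComponents_setOf_eval_eq_zero_le (by omega) ?_ fun x => ?_
  · exact totalDegree_finsetSum_le fun i _ =>
      (totalDegree_pow _ _).trans (Nat.mul_le_mul_left 2 (hp i))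
  · rw [eval_sum_sq]; positivity

variable {κ α β : Type*} [Finite κ] [Fintype α] [Fintype β] {d : ℕ} {p : κ → MvPolynomial σ ℝ}
  {q : α → MvPolynomial σ ℝ} {r : β → MvPolynomial σ ℝ}

theorem enatCard_connectedComponents_setOf_eval_eq_zero_and_nonpos_le (hd : 2 ≤ d)
    (hp : ∀ i, (p i).totalDegree ≤ d) (hq : ∀ i, (q i).totalDegree ≤ d) :
    ENat.card (ConnectedComponents
      {x : σ → ℝ | (∀ i, eval x (p i) = 0) ∧ ∀ i, eval x (q i) ≤ 0}) ≤
      ((2 * d) ^ (Fintype.card σ + Fintype.card α) : ℕ) := by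
  let P : κ ⊕ α → MvPolynomial (σ ⊕ α) ℝ := Sum.elim (fun i => rename Sum.inl (p i))
    fun i => rename Sum.inl (q i) + X (Sum.inr i) ^ 2
  have hP : ∀ i, (P i).totalDegree ≤ d
    | .inl i => (totalDegree_rename_le _ _).trans (hp i)
    | .inr i => (totalDegree_add _ _).trans <|
        max_le ((totalDegree_rename_le _ _).trans (hq i)) (by rwa [totalDegree_X_pow])
  have zeros_eq : {z | ∀ i, eval z (P i) = 0} = {z : σ ⊕ α → ℝ |
      (∀ i, eval (z ∘ Sum.inl) (p i) = 0) ∧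
        ∀ i, eval (z ∘ Sum.inl) (q i) + z (Sum.inr i) ^ 2 = 0} := by
    ext z
    simp [P, eval_rename]
  have zeros_card_le := enatCard_connectedComponents_setOf_forall_eval_eq_zero_le (by omega) hP
  rw [zeros_eq, Fintype.card_sum] at zeros_card_le
  refine enatCard_connectedComponents_le_of_forall_finset fun S hS =>
    ⟨_, (· ∘ Sum.inl), zeros_card_le, by fun_prop, fun z hz => ⟨hz.1, fun i => ?_⟩,
      fun x hx => ⟨Sum.elim x fun i => √(-eval x (q i)), ⟨(hS hx).1, fun i => ?_⟩, rfl⟩⟩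
  · linarith [hz.2 i, sq_nonneg (z (Sum.inr i))]
  · simp [Real.sq_sqrt (neg_nonneg.2 ((hS hx).2 i))]

theorem enatCard_connectedComponents_basicSemialgebraicSet_le (hd : 2 ≤ d)
    (hp : ∀ i, (p i).totalDegree ≤ d) (hq : ∀ i, (q i).totalDegree ≤ d)
    (hr : ∀ i, (r i).totalDegree ≤ d) :
    ENat.card (ConnectedComponents (basicSemialgebraicSet p q r)) ≤
      ((2 * d) ^ (Fintype.card σ + (Fintype.card α + Fintype.card β)) : ℕ) := by
  refine enatCard_connectedComponents_le_of_forall_finset (Y := σ → ℝ) fun S hS => ?_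
  obtain ⟨ε, hε, hrε⟩ : ∃ ε > 0, ∀ x ∈ S, ∀ i, eval x (r i) + ε ≤ 0 := by
    have eventually_le : ∀ᶠ ε in nhdsWithin (0 : ℝ) (Set.Ioi 0), ∀ x ∈ S, ∀ i,
        eval x (r i) + ε ≤ 0 :=
      (Filter.eventually_all_finset S).2 fun x hx => Filter.eventually_all.2 fun i =>
        ((eventually_le_nhds (neg_pos.2 ((hS hx).2.2 i))).filter_mono nhdsWithin_le_nhds).mono
          fun ε hε => by linarith
    exact (eventually_le.and self_mem_nhdsWithin).exists.imp fun ε hε => ⟨hε.2, hε.1⟩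
  let Q : α ⊕ β → MvPolynomial σ ℝ := Sum.elim q fun i => r i + C ε
  have hQ : ∀ i, (Q i).totalDegree ≤ d :=
    Sum.rec hq fun i => (totalDegree_add _ _).trans (by simpa using hr i)
  refine ⟨{x | (∀ i, eval x (p i) = 0) ∧ ∀ i, eval x (Q i) ≤ 0}, id, ?_, continuousOn_id, ?_, ?_⟩
  · simpa using enatCard_connectedComponents_setOf_eval_eq_zero_and_nonpos_le hd hp hQ
  · refine fun x hx => ⟨hx.1, fun i => hx.2 (Sum.inl i), fun i => ?_⟩
    have : eval x (r i) + ε ≤ 0 := by simpa [Q] using hx.2 (Sum.inr i)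
    exact (lt_add_of_pos_right _ hε).trans_le this
  · exact fun x hx =>
      ⟨x, ⟨(hS hx).1, Sum.rec (hS hx).2.1 fun i => by simpa [Q] using hrε x hx i⟩, rfl⟩

theorem enatCard_connectedComponents_basicSemialgebraicSet_inter_affineSubspace_le (hd : 2 ≤ d)
    (hp : ∀ i, (p i).totalDegree ≤ d) (hq : ∀ i, (q i).totalDegree ≤ d)
    (hr : ∀ i, (r i).totalDegree ≤ d) {L : AffineSubspace ℝ (EuclideanSpace ℝ σ)}
    (hL : (L : Set (EuclideanSpace ℝ σ)).Nonempty) :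
    ENat.card (ConnectedComponents
      (WithLp.ofLp ⁻¹' basicSemialgebraicSet p q r ∩ L : Set (EuclideanSpace ℝ σ))) ≤
      ((2 * d) ^ (Fintype.card σ + (Fintype.card α + Fintype.card β)) : ℕ) := by
  obtain ⟨l, hl, hmem⟩ := exists_mem_affineSubspace_iff_forall_eval_eq_zero
    (EuclideanSpace.basisFun σ ℝ).toBasis hL
  have repr_eq (v : EuclideanSpace ℝ σ) :
      ⇑((EuclideanSpace.basisFun σ ℝ).toBasis.repr v) = v.ofLp := by
    ext i
    simp
  have hpl : ∀ i, (Sum.elim p l i).totalDegree ≤ d := Sum.rec hp fun i => (hl i).trans (by omega)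
  have preimage_eq : WithLp.toLp 2 ⁻¹' (WithLp.ofLp ⁻¹' basicSemialgebraicSet p q r ∩ L) =
      basicSemialgebraicSet (Sum.elim p l) q r := by
    ext x
    simp [basicSemialgebraicSet, hmem, repr_eq, and_comm, and_assoc]
  refine enatCard_connectedComponents_le_of_forall_finset fun S hS => ⟨WithLp.toLp 2 ⁻¹' _,
    WithLp.toLp 2, ?_, by fun_prop, Set.mapsTo_preimage _ _, fun x hx => ⟨x.ofLp, hS hx, rfl⟩⟩
  rw [preimage_eq]
  exact enatCard_connectedComponents_basicSemialgebraicSet_le hd hpl hq hr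

end Semialgebraic

/-- The intersection of a basic semialgebraic set (defined by equalities `pₖ = 0`,
weak inequalities `q_ℓ ≤ 0` and strict inequalities `r_t < 0`, all polynomials of
total degree at most `d`, with `d ≥ 2` and `b = b₁ + b₂` inequality constraints)
with any affine subspace has at most `(2d)^(N+b)` connected components. -/
theorem semialgebraic_inter_affine_components (N d k b₁ b₂ : ℕ)
    (hN : 1 ≤ N) (hd : 2 ≤ d)
    (p : Fin k → MvPolynomial (Fin N) ℝ)
    (q : Fin b₁ → MvPolynomial (Fin N) ℝ)
    (r : Fin b₂ → MvPolynomial (Fin N) ℝ)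
    (hp : ∀ i, (p i).totalDegree ≤ d)
    (hq : ∀ i, (q i).totalDegree ≤ d)
    (hr : ∀ i, (r i).totalDegree ≤ d)
    (L : AffineSubspace ℝ (EuclideanSpace ℝ (Fin N)))
    (hL : (L : Set (EuclideanSpace ℝ (Fin N))).Nonempty) :
    Finite (ConnectedComponents
      ↥({x : EuclideanSpace ℝ (Fin N) |
          (∀ i, MvPolynomial.eval x (p i) = 0) ∧
          (∀ i, MvPolynomial.eval x (q i) ≤ 0) ∧
          (∀ i, MvPolynomial.eval x (r i) < 0)}
        ∩ (L : Set (EuclideanSpace ℝ (Fin N))))) ∧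
    Nat.card (ConnectedComponents
      ↥({x : EuclideanSpace ℝ (Fin N) |
          (∀ i, MvPolynomial.eval x (p i) = 0) ∧
          (∀ i, MvPolynomial.eval x (q i) ≤ 0) ∧
          (∀ i, MvPolynomial.eval x (r i) < 0)}
        ∩ (L : Set (EuclideanSpace ℝ (Fin N)))))
      ≤ (2 * d) ^ (N + (b₁ + b₂)) := by
  have card_le := enatCard_connectedComponents_basicSemialgebraicSet_inter_affineSubspace_le hd
    hp hq hr hL
  simp only [Fintype.card_fin] at card_le
  have finite := ENat.card_lt_top.1 (card_le.trans_lt (ENat.natCast_lt_top _))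
  rw [ENat.card_eq_coe_natCard, Nat.cast_le] at card_le
  exact ⟨finite, card_le⟩
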